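/- Let d ≥ 1, λ > 0, m ≥ 1, T ≥ 1, and A_1,…,A_T ∈ ℝ^d. Then Σ_{t=1}^T ‖A_t‖_{V_t(λ)^{-1}} · ( Σ_{s=max(1,t−m)}^{t−1} ‖A_s‖_{V_t(λ)^{-1}} ) ≤ m · Σ_{t=1}^T ‖A_t‖²_{V_t(λ)^{-1}}. -/

import Mathlib

open Finset Matrix

/-- `mnorm M x = √(xᵀ M x)`, the norm associated to a positive definite matrix `M`. -/
noncomputable def mnorm {d : ℕ} (M : Matrix (Fin d) (Fin d) ℝ) (x : Fin d → ℝ) : ℝ :=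
  Real.sqrt (x ⬝ᵥ M.mulVec x)

/-- `Vmat A lam t = lam • I + ∑_{s=1}^{t-1} A_s A_sᵀ`. -/
noncomputable def Vmat {d : ℕ} (A : ℕ → Fin d → ℝ) (lam : ℝ) (t : ℕ) :
    Matrix (Fin d) (Fin d) ℝ :=
  lam • (1 : Matrix (Fin d) (Fin d) ℝ) + ∑ s ∈ Finset.Ico 1 t, vecMulVec (A s) (A s)

theorem Vmat_posDef {d : ℕ} (A : ℕ → Fin d → ℝ) (lam : ℝ) (hlam : 0 < lam) (t : ℕ) :
    (Vmat A lam t).PosDef := by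
  unfold Vmat
  refine Matrix.PosDef.add_posSemidef (Matrix.PosDef.one.smul hlam) ?_
  refine Matrix.posSemidef_sum _ fun s _ => ?_
  simpa using Matrix.posSemidef_vecMulVec_self_star (A s)

theorem Vmat_mono {d : ℕ} (A : ℕ → Fin d → ℝ) (lam : ℝ) (s t : ℕ) (h : s ≤ t)
    (y : Fin d → ℝ) :
    y ⬝ᵥ (Vmat A lam s).mulVec y ≤ y ⬝ᵥ (Vmat A lam t).mulVec y := by
  induction t, h using Nat.le_induction with
  | base => exact le_rfl
  | succ t h ih =>
    refine ih.trans ?_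
    rcases Nat.eq_zero_or_pos t with rfl | ht
    · simp [Vmat]
    · have : Vmat A lam (t+1) = Vmat A lam t + vecMulVec (A t) (A t) := by
        unfold Vmat
        rw [Finset.sum_Ico_succ_top ht, add_assoc]
      rw [this, Matrix.add_mulVec, dotProduct_add]
      have h2 : (vecMulVec (A t) (A t)).PosSemidef := by
        simpa using Matrix.posSemidef_vecMulVec_self_star (A t)
      have := h2.dotProduct_mulVec_nonneg y
      simp only [star_trivial] at this
      linarith

theorem Vinv_anti {d : ℕ} (A : ℕ → Fin d → ℝ) (lam : ℝ) (hlam : 0 < lam) (s t : ℕ) (h : s ≤ t)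
    (x : Fin d → ℝ) :
    x ⬝ᵥ (Vmat A lam t)⁻¹.mulVec x ≤ x ⬝ᵥ (Vmat A lam s)⁻¹.mulVec x := by
  have hs := Vmat_posDef A lam hlam s
  have ht := Vmat_posDef A lam hlam t
  have us : IsUnit (Vmat A lam s).det := (Matrix.isUnit_iff_isUnit_det _).1 hs.isUnit
  have ut : IsUnit (Vmat A lam t).det := (Matrix.isUnit_iff_isUnit_det _).1 ht.isUnit
  set y := (Vmat A lam t)⁻¹.mulVec x with hy
  set z := (Vmat A lam s)⁻¹.mulVec x with hz
  have ey : (Vmat A lam t).mulVec y = x := by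
    rw [hy, Matrix.mulVec_mulVec, Matrix.mul_nonsing_inv _ ut, Matrix.one_mulVec]
  have ez : (Vmat A lam s).mulVec z = x := by
    rw [hz, Matrix.mulVec_mulVec, Matrix.mul_nonsing_inv _ us, Matrix.one_mulVec]
  have h1 := Vmat_mono A lam s t h y
  rw [ey] at h1
  have h2 := hs.posSemidef.dotProduct_mulVec_nonneg (z - y)
  simp only [star_trivial] at h2
  have sym : z ⬝ᵥ (Vmat A lam s).mulVec y = x ⬝ᵥ y := by
    have hT : (Vmat A lam s)ᵀ = Vmat A lam s := by
      simpa [Matrix.IsHermitian, Matrix.conjTranspose_eq_transpose_of_trivial] using hs.isHermitian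
    rw [Matrix.dotProduct_mulVec, ← Matrix.mulVec_transpose, hT, ez]
  rw [Matrix.mulVec_sub, ez, dotProduct_sub, sub_dotProduct, sub_dotProduct, sym] at h2
  rw [dotProduct_comm y x] at h1 h2
  rw [dotProduct_comm z x] at h2
  linarith

theorem mnorm_anti {d : ℕ} (A : ℕ → Fin d → ℝ) (lam : ℝ) (hlam : 0 < lam) (s t : ℕ) (h : s ≤ t)
    (x : Fin d → ℝ) : mnorm (Vmat A lam t)⁻¹ x ≤ mnorm (Vmat A lam s)⁻¹ x :=
  Real.sqrt_le_sqrt (Vinv_anti A lam hlam s t h x)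

theorem window_sum (f : ℕ → ℝ) (hf : ∀ i, 0 ≤ f i) (m T : ℕ) :
    ∑ t ∈ Finset.Icc 1 T, ∑ s ∈ Finset.Ico (max 1 (t - m)) t, f s ≤
      (m : ℝ) * ∑ t ∈ Finset.Icc 1 T, f t := by
  rw [Finset.sum_comm' (t' := Finset.Icc 1 T) (s' := fun s => Finset.Icc (s+1) (min T (s+m)))
    (by intro x y; simp only [Finset.mem_Icc, Finset.mem_Ico]; omega), Finset.mul_sum]
  refine Finset.sum_le_sum fun s _ => ?_
  rw [Finset.sum_const, nsmul_eq_mul]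
  refine mul_le_mul_of_nonneg_right ?_ (hf s)
  rw [Nat.card_Icc]
  exact_mod_cast (by omega)

theorem window_cross_term_bound
    {d : ℕ} (hd : 1 ≤ d) (lam : ℝ) (hlam : 0 < lam)
    (m T : ℕ) (hm : 1 ≤ m) (hT : 1 ≤ T) (A : ℕ → Fin d → ℝ) :
    ∑ t ∈ Finset.Icc 1 T, mnorm (Vmat A lam t)⁻¹ (A t) *
        (∑ s ∈ Finset.Ico (max 1 (t - m)) t, mnorm (Vmat A lam t)⁻¹ (A s)) ≤
      (m : ℝ) * ∑ t ∈ Finset.Icc 1 T, (mnorm (Vmat A lam t)⁻¹ (A t)) ^ 2 := by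
  set f : ℕ → ℝ := fun t => (mnorm (Vmat A lam t)⁻¹ (A t)) ^ 2 with hfdef
  have hf : ∀ i, 0 ≤ f i := fun i => sq_nonneg _
  have hw := window_sum f hf m T
  have key : ∀ t ∈ Finset.Icc 1 T, mnorm (Vmat A lam t)⁻¹ (A t) *
        (∑ s ∈ Finset.Ico (max 1 (t - m)) t, mnorm (Vmat A lam t)⁻¹ (A s)) ≤
      (m : ℝ) * f t / 2 + (∑ s ∈ Finset.Ico (max 1 (t - m)) t, f s) / 2 := by
    intro t _
    have h1 : mnorm (Vmat A lam t)⁻¹ (A t) *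
        (∑ s ∈ Finset.Ico (max 1 (t - m)) t, mnorm (Vmat A lam t)⁻¹ (A s)) ≤
        ∑ s ∈ Finset.Ico (max 1 (t - m)) t, (f t / 2 + f s / 2) := by
      rw [Finset.mul_sum]
      refine Finset.sum_le_sum fun s hs => ?_
      have hst : s ≤ t := (Finset.mem_Ico.1 hs).2.le
      have h0 : 0 ≤ mnorm (Vmat A lam t)⁻¹ (A s) := Real.sqrt_nonneg _
      have h2 : (mnorm (Vmat A lam t)⁻¹ (A s)) ^ 2 ≤ f s :=
        pow_le_pow_left₀ h0 (mnorm_anti A lam hlam s t hst (A s)) 2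
      have h3 : f t = (mnorm (Vmat A lam t)⁻¹ (A t)) ^ 2 := rfl
      nlinarith [sq_nonneg (mnorm (Vmat A lam t)⁻¹ (A t) - mnorm (Vmat A lam t)⁻¹ (A s))]
    rw [Finset.sum_add_distrib, Finset.sum_const, nsmul_eq_mul, Nat.card_Ico,
      ← Finset.sum_div] at h1
    have h4 : ((t - max 1 (t - m) : ℕ) : ℝ) ≤ m := by exact_mod_cast (by omega)
    have h5 := mul_le_mul_of_nonneg_right h4 (hf t)
    linarith
  refine (Finset.sum_le_sum key).trans ?_
  rw [Finset.sum_add_distrib, ← Finset.sum_div, ← Finset.sum_div, ← Finset.mul_sum]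
  linarith
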